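/- arXiv:solv-int/9812001 — 5 statements merged into one kernel-verified Lean document; each statement's English description precedes it below -/
import Mathlib

section
/- Duality between Stäckel systems (Proposition). Fix n ≥ 1 and functions s, s̃ : Fin n → Fin n → ℝ → ℝ with s k j = s̃ k j for every k ≠ 0 (the two data differ in the first row only). For q ∈ ℝⁿ define the Stäckel matrices S(q) and S̃(q) by S(q) k j = s k j (q_j) and S̃(q) k j = s̃ k j (q_j), and suppose det S(q) ≠ 0 and det S̃(q) ≠ 0. Given potentials U_j : ℝ → ℝ, define the Hamiltonians H(p,q) = Σ_j (S(q)⁻¹)_{j 0} · (p_j² + U_j(q_j)) and H̃(p,q) = Σ_j (S̃(q)⁻¹)_{j 0} · (p_j² + U_j(q_j)). Then H̃(p,q) = (det S(q) / det S̃(q)) · H(p,q) for all (p,q) ∈ ℝⁿ × ℝⁿ. -/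
open Matrix

/-!
Column `i` of `A⁻¹` is column `i` of `adjugate A` divided by `det A`, and that column of the
adjugate consists of cofactors along row `i`, which do not involve row `i` itself. Changing only
row `i` of a Stäckel matrix therefore leaves `det A` times its Hamiltonian unchanged.
-/

section RowChange

variable {ι R : Type*} [Fintype ι] [DecidableEq ι] [CommRing R]

theorem adjugate_apply_eq_of_forall_ne_row_eq {A B : Matrix ι ι R} {i : ι}
    (hrows : ∀ k, k ≠ i → A k = B k) (j : ι) : A.adjugate j i = B.adjugate j i := by
  have hupdate : A.updateRow i (Pi.single j 1) = B.updateRow i (Pi.single j 1) :=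
    Function.update_eq_iff.2
      ⟨(updateRow_self ..).symm, fun k hk => (hrows k hk).trans (updateRow_ne hk).symm⟩
  rw [adjugate_apply, adjugate_apply, hupdate]

theorem det_smul_inv_eq_adjugate {A : Matrix ι ι R} (hA : IsUnit A.det) :
    A.det • A⁻¹ = A.adjugate := by
  rw [inv_def, smul_smul, Ring.mul_inverse_cancel _ hA, one_smul]

theorem det_mul_inv_apply_eq_of_forall_ne_row_eq {A B : Matrix ι ι R} {i : ι}
    (hrows : ∀ k, k ≠ i → A k = B k) (hA : IsUnit A.det) (hB : IsUnit B.det) (j : ι) :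
    A.det * A⁻¹ j i = B.det * B⁻¹ j i :=
  calc
    A.det * A⁻¹ j i = A.adjugate j i := congr_fun₂ (det_smul_inv_eq_adjugate hA) j i
    _ = B.adjugate j i := adjugate_apply_eq_of_forall_ne_row_eq hrows j
    _ = B.det * B⁻¹ j i := (congr_fun₂ (det_smul_inv_eq_adjugate hB) j i).symm

end RowChange

theorem stackel_duality_general {ι K Q P : Type*} [Fintype ι] [DecidableEq ι] [Field K]
    (i : ι) (s s' : ι → ι → Q → K) (hrow : ∀ k j, k ≠ i → s k j = s' k j)
    (f : ι → P → Q → K) (p : ι → P) (q : ι → Q) (S S' : Matrix ι ι K)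
    (hS : ∀ k j, S k j = s k j (q j)) (hS' : ∀ k j, S' k j = s' k j (q j))
    (hdet : S.det ≠ 0) (hdet' : S'.det ≠ 0) :
    ∑ j, S'⁻¹ j i * f j (p j) (q j) =
      (S.det / S'.det) * ∑ j, S⁻¹ j i * f j (p j) (q j) := by
  have hrows : ∀ k, k ≠ i → S k = S' k := fun k hk => funext fun j => by
    rw [hS, hS', hrow k j hk]
  have hinv (j : ι) : S'⁻¹ j i = S.det / S'.det * S⁻¹ j i := by
    rw [div_mul_eq_mul_div, eq_div_iff hdet', mul_comm]
    exact (det_mul_inv_apply_eq_of_forall_ne_row_eq hrows hdet.isUnit hdet'.isUnit j).symm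
  simp only [hinv, Finset.mul_sum, mul_assoc]

/-- Duality between Stäckel systems: if two Stäckel matrices differ in the first
row only, then the corresponding Stäckel Hamiltonians are proportional, with the
ratio of the determinants as the factor. -/
theorem stackel_duality (n : ℕ) (hn : 1 ≤ n)
    (s s' : Fin n → Fin n → ℝ → ℝ)
    (hrow : ∀ k j : Fin n, k ≠ ⟨0, hn⟩ → s k j = s' k j)
    (U : Fin n → ℝ → ℝ) (p q : Fin n → ℝ)
    (S S' : Matrix (Fin n) (Fin n) ℝ)
    (hS : ∀ k j, S k j = s k j (q j))
    (hS' : ∀ k j, S' k j = s' k j (q j))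
    (hdet : S.det ≠ 0) (hdet' : S'.det ≠ 0) :
    (∑ j, S'⁻¹ j ⟨0, hn⟩ * ((p j) ^ 2 + U j (q j))) =
      (S.det / S'.det) * ∑ j, S⁻¹ j ⟨0, hn⟩ * ((p j) ^ 2 + U j (q j)) :=
  stackel_duality_general ⟨0, hn⟩ s s' hrow (fun j x y => x ^ 2 + U j y) p q S S' hS hS'
    hdet hdet'
end

section
/- Holt potential from the cubic Stäckel system. Let α ≠ 0, γ, δ ∈ ℝ, x > 0, and define H(q₁,q₂,p₁,p₂) = (1/4)(p₁² + p₂²) + α²(q₁³ + q₂³) + (γ/2)(q₁ + q₂) + δ. The substitution q₁ = (3/4)x^{2/3} + p_y/(3α), q₂ = (3/4)x^{2/3} − p_y/(3α), p₁ = p_x·x^{1/3} − (3α/2)y, p₂ = p_x·x^{1/3} + (3α/2)y is a canonical transformation (it satisfies {p₁,q₁} = {p₂,q₂} = 1 and {p₁,q₂} = {p₂,q₁} = {q₁,q₂} = {p₁,p₂} = 0 with respect to the canonical Poisson bracket in (x,y,p_x,p_y)), and under it x^{−2/3}·H(q₁,q₂,p₁,p₂) = (1/2)(p_x² + p_y²)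 + (9α²/8)·x^{−2/3}·((3/4)x² + y²) + δ·x^{−2/3} + 3γ/4. -/
/-- The canonical Poisson bracket of two functions of `(x, y, pₓ, p_y)` on `ℝ⁴`:
`{F,G} = ∂F/∂pₓ·∂G/∂x − ∂F/∂x·∂G/∂pₓ + ∂F/∂p_y·∂G/∂y − ∂F/∂y·∂G/∂p_y`. -/
noncomputable def pb (F G : ℝ → ℝ → ℝ → ℝ → ℝ) (x y px py : ℝ) : ℝ :=
    deriv (fun s => F x y s py) px * deriv (fun s => G s y px py) x
  - deriv (fun s => F s y px py) x * deriv (fun s => G x y s py) px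
  + deriv (fun s => F x y px s) py * deriv (fun s => G x s px py) y
  - deriv (fun s => F x s px py) y * deriv (fun s => G x y px s) py

/-- The separation variables of the Holt system dual to the first Hénon–Heiles
system (here `x ^ ((2:ℝ)/3)` is the real power). -/
noncomputable def q₁ (α : ℝ) : ℝ → ℝ → ℝ → ℝ → ℝ :=
  fun x _ _ py => (3 / 4) * x ^ ((2 : ℝ) / 3) + py / (3 * α)
noncomputable def q₂ (α : ℝ) : ℝ → ℝ → ℝ → ℝ → ℝ :=
  fun x _ _ py => (3 / 4) * x ^ ((2 : ℝ) / 3) - py / (3 * α)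
noncomputable def p₁ (α : ℝ) : ℝ → ℝ → ℝ → ℝ → ℝ :=
  fun x y px _ => px * x ^ ((1 : ℝ) / 3) - (3 * α / 2) * y
noncomputable def p₂ (α : ℝ) : ℝ → ℝ → ℝ → ℝ → ℝ :=
  fun x y px _ => px * x ^ ((1 : ℝ) / 3) + (3 * α / 2) * y

/-- The Stäckel Hamiltonian of the cubic uniform family with `β = 0`. -/
noncomputable def Ham (α γ δ : ℝ) (Q₁ Q₂ P₁ P₂ : ℝ) : ℝ :=
  (1 / 4) * (P₁ ^ 2 + P₂ ^ 2) + α ^ 2 * (Q₁ ^ 3 + Q₂ ^ 3) + (γ / 2) * (Q₁ + Q₂) + δ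

/-!
Each `p` is linear in `(pₓ, y)` with `y`-coefficient `∓3α/2`, and each `q` is affine in `p_y` with
`p_y`-coefficient `±1/(3α)`. The `x`-part of every mixed bracket is
`x^(1/3) · d(¾ x^(2/3))/dx = 1/2`, and the `y`-part is `±1/2`; the two halves add up to `1` when the
indices agree and cancel otherwise. In the Hamiltonian only the terms even in `p_y` and `y` survive,
and these are `x^(2/3)` times the natural Holt Hamiltonian.
-/

/-- A position-type function `g(x) + b p_y` on phase space: a function of `x` shifted along the
momentum conjugate to `y`. The separation variables `q₁`, `q₂` have this form. -/
def shiftedPosition (g : ℝ → ℝ) (b : ℝ) : ℝ → ℝ → ℝ → ℝ → ℝ :=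
  fun x _ _ py => g x + b * py

/-- A momentum-type function `pₓ f(x) + a y` on phase space: a momentum along `x` shifted by a
multiple of `y`. The separation momenta `p₁`, `p₂` have this form. -/
def shiftedMomentum (f : ℝ → ℝ) (a : ℝ) : ℝ → ℝ → ℝ → ℝ → ℝ :=
  fun x y px _ => px * f x + a * y

section Bracket

variable (f g h : ℝ → ℝ) (a b c x y px py : ℝ)

theorem pb_shiftedMomentum_shiftedPosition :
    pb (shiftedMomentum f a) (shiftedPosition g b) x y px py = f x * deriv g x - a * b := by
  simp [pb, shiftedMomentum, shiftedPosition]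

theorem pb_shiftedPosition_shiftedPosition :
    pb (shiftedPosition g b) (shiftedPosition h c) x y px py = 0 := by
  simp [pb, shiftedPosition]

theorem pb_shiftedMomentum_shiftedMomentum :
    pb (shiftedMomentum f a) (shiftedMomentum h c) x y px py =
      px * (f x * deriv h x - deriv f x * h x) := by
  simp only [pb, shiftedMomentum, deriv_add_const', deriv_const_mul_field', deriv_mul_const_field',
    deriv_const', deriv_id'']
  ring

end Bracket

section Substitution

variable (α : ℝ)

theorem q₁_eq_shiftedPosition :
    q₁ α = shiftedPosition (fun x => 3 / 4 * x ^ ((2 : ℝ) / 3)) (1 / (3 * α)) := by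
  funext x y px py
  simp only [q₁, shiftedPosition]
  ring

theorem q₂_eq_shiftedPosition :
    q₂ α = shiftedPosition (fun x => 3 / 4 * x ^ ((2 : ℝ) / 3)) (-(1 / (3 * α))) := by
  funext x y px py
  simp only [q₂, shiftedPosition]
  ring

theorem p₁_eq_shiftedMomentum :
    p₁ α = shiftedMomentum (fun x => x ^ ((1 : ℝ) / 3)) (-(3 * α / 2)) := by
  funext x y px py
  simp only [p₁, shiftedMomentum]
  ring

theorem p₂_eq_shiftedMomentum :
    p₂ α = shiftedMomentum (fun x => x ^ ((1 : ℝ) / 3)) (3 * α / 2) :=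
  rfl

end Substitution

theorem rpow_one_third_mul_deriv_rpow_two_thirds {x : ℝ} (hx : 0 < x) :
    x ^ ((1 : ℝ) / 3) * deriv (fun s : ℝ => 3 / 4 * s ^ ((2 : ℝ) / 3)) x = 1 / 2 := by
  have hderiv : deriv (fun s : ℝ => 3 / 4 * s ^ ((2 : ℝ) / 3)) x =
      3 / 4 * (2 / 3 * x ^ ((2 : ℝ) / 3 - 1)) :=
    ((Real.hasDerivAt_rpow_const (Or.inl hx.ne')).const_mul _).deriv
  have hcancel : x ^ ((1 : ℝ) / 3) * x ^ ((2 : ℝ) / 3 - 1) = 1 := by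
    rw [← Real.rpow_add hx]
    norm_num
  rw [hderiv]
  linear_combination (1 / 2) * hcancel

theorem pb_shiftedMomentum_shiftedPosition_of_rpow (a b : ℝ) {x : ℝ} (hx : 0 < x) (y px py : ℝ) :
    pb (shiftedMomentum (fun x => x ^ ((1 : ℝ) / 3)) a)
      (shiftedPosition (fun x => 3 / 4 * x ^ ((2 : ℝ) / 3)) b) x y px py = 1 / 2 - a * b := by
  rw [pb_shiftedMomentum_shiftedPosition, rpow_one_third_mul_deriv_rpow_two_thirds hx]

theorem Ham_add_sub (α γ δ Q R P S : ℝ) :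
    Ham α γ δ (Q + R) (Q - R) (P - S) (P + S) =
      1 / 2 * (P ^ 2 + S ^ 2) + 2 * α ^ 2 * (Q ^ 3 + 3 * Q * R ^ 2) + γ * Q + δ := by
  unfold Ham
  ring

theorem Ham_separationVariables {α : ℝ} (hα : α ≠ 0) (γ δ : ℝ) {x : ℝ} (hx : 0 ≤ x)
    (y px py : ℝ) :
    Ham α γ δ (q₁ α x y px py) (q₂ α x y px py) (p₁ α x y px py) (p₂ α x y px py) =
      x ^ ((2 : ℝ) / 3) * (1 / 2 * (px ^ 2 + py ^ 2) + 3 * γ / 4)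
        + 9 * α ^ 2 / 8 * (3 / 4 * x ^ 2 + y ^ 2) + δ := by
  have hsq : (x ^ ((1 : ℝ) / 3)) ^ 2 = x ^ ((2 : ℝ) / 3) := by
    rw [← Real.rpow_mul_natCast hx]
    norm_num
  have hcube : (x ^ ((2 : ℝ) / 3)) ^ 3 = x ^ 2 := by
    rw [← Real.rpow_mul_natCast hx]
    norm_num
  have hpy : α ^ 2 * (py / (3 * α)) ^ 2 = py ^ 2 / 9 := by
    field_simp
    norm_num
  unfold q₁ q₂ p₁ p₂
  rw [Ham_add_sub]
  linear_combination px ^ 2 / 2 * hsq + 27 * α ^ 2 / 32 * hcube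
    + 9 / 2 * x ^ ((2 : ℝ) / 3) * hpy

/-- Holt potential from the cubic Stäckel system: the substitution is canonical on
the half-space `x > 0`, and after the time change (division by `x^(2/3)`) the
Hamiltonian takes the natural Holt form. -/
theorem holt_from_cubic (α γ δ : ℝ) (hα : α ≠ 0) :
    (∀ x y px py : ℝ, 0 < x → pb (p₁ α) (q₁ α) x y px py = 1) ∧
    (∀ x y px py : ℝ, 0 < x → pb (p₂ α) (q₂ α) x y px py = 1) ∧
    (∀ x y px py : ℝ, 0 < x → pb (p₁ α) (q₂ α) x y px py = 0) ∧
    (∀ x y px py : ℝ, 0 < x → pb (p₂ α) (q₁ α) x y px py = 0) ∧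
    (∀ x y px py : ℝ, 0 < x → pb (q₁ α) (q₂ α) x y px py = 0) ∧
    (∀ x y px py : ℝ, 0 < x → pb (p₁ α) (p₂ α) x y px py = 0) ∧
    (∀ x y px py : ℝ, 0 < x →
      x ^ (-(2 : ℝ) / 3) *
          Ham α γ δ (q₁ α x y px py) (q₂ α x y px py) (p₁ α x y px py) (p₂ α x y px py) =
        (1 / 2) * (px ^ 2 + py ^ 2)
          + (9 * α ^ 2 / 8) * x ^ (-(2 : ℝ) / 3) * ((3 / 4) * x ^ 2 + y ^ 2)
          + δ * x ^ (-(2 : ℝ) / 3) + 3 * γ / 4) := by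
  have hcoeff : 3 * α / 2 * (1 / (3 * α)) = 1 / 2 := by
    field_simp
  refine ⟨fun x y px py hx => ?_, fun x y px py hx => ?_, fun x y px py hx => ?_,
    fun x y px py hx => ?_, fun x y px py _ => ?_, fun x y px py _ => ?_, fun x y px py hx => ?_⟩
  · rw [p₁_eq_shiftedMomentum, q₁_eq_shiftedPosition,
      pb_shiftedMomentum_shiftedPosition_of_rpow _ _ hx]
    linear_combination hcoeff
  · rw [p₂_eq_shiftedMomentum, q₂_eq_shiftedPosition,
      pb_shiftedMomentum_shiftedPosition_of_rpow _ _ hx]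
    linear_combination hcoeff
  · rw [p₁_eq_shiftedMomentum, q₂_eq_shiftedPosition,
      pb_shiftedMomentum_shiftedPosition_of_rpow _ _ hx]
    linear_combination -hcoeff
  · rw [p₂_eq_shiftedMomentum, q₁_eq_shiftedPosition,
      pb_shiftedMomentum_shiftedPosition_of_rpow _ _ hx]
    linear_combination -hcoeff
  · rw [q₁_eq_shiftedPosition, q₂_eq_shiftedPosition, pb_shiftedPosition_shiftedPosition]
  · rw [p₁_eq_shiftedMomentum, p₂_eq_shiftedMomentum, pb_shiftedMomentum_shiftedMomentum]
    ring
  · have hcancel : x ^ (-(2 : ℝ) / 3) * x ^ ((2 : ℝ) / 3) = 1 := by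
      rw [← Real.rpow_add hx]
      norm_num
    rw [Ham_separationVariables hα γ δ hx.le]
    linear_combination (1 / 2 * (px ^ 2 + py ^ 2) + 3 * γ / 4) * hcancel
end

section
/- Integrable deformation of the Kepler problem. Let β, γ, δ ∈ ℂ, let s, t ∈ ℂ with s·t ≠ 0, and let p_x, p_y ∈ ℂ. Define q₁ = s − t, q₂ = −i(s + t), p₁ = p_x·s − p_y·t, p₂ = i(p_x·s + p_y·t), and H = (1/4)(p₁² + p₂²) + (β/2)(q₁² + q₂²) + (γ/2)(q₁ + q₂) + δ. Then q₁² + q₂² = −4st and 2H/(q₁² + q₂²) = (1/2)p_x·p_y + β + (γ/4)·((1+i)/s − (1−i)/t) − δ/(2st). -/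
/-!
Since `i ^ 2 = -1`, the form `x ^ 2 + y ^ 2` becomes `-4 * a * b` at `x = a - b`,
`y = ±i * (a + b)`. Positions (`a = s`, `b = t`) and momenta (`a = px * s`, `b = py * t`) both have
this shape, so dividing by `q₁ ^ 2 + q₂ ^ 2 = -4 * s * t` cancels `s * t` from the kinetic term,
turns the oscillator term into the constant `β` and the constant `δ` into a Kepler potential.
-/

theorem sub_sq_add_mul_add_sq_of_sq_eq_neg_one {R : Type*} [CommRing R] {i : R} (hi : i ^ 2 = -1)
    (a b : R) : (a - b) ^ 2 + (i * (a + b)) ^ 2 = -4 * a * b := by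
  linear_combination (a + b) ^ 2 * hi

section Field

variable {K : Type*} [Field K]

theorem sub_add_neg_mul_add_div_mul (i : K) {s t : K} (hs : s ≠ 0) (ht : t ≠ 0) :
    (s - t + -i * (s + t)) / (s * t) = (1 - i) / t - (1 + i) / s := by
  field_simp
  ring

/-- The Stäckel Hamiltonian of the cubic family with `α = 0` at position `(q₁, q₂)` and momentum
`(p₁, p₂)`, over an arbitrary field because the change of coordinates is purely algebraic. In
characteristic two the coefficients `1 / 4`, `β / 2` and `γ / 2` are junk values `0`. -/
def stackelHamiltonian (β γ δ q₁ q₂ p₁ p₂ : K) : K :=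
  (1 / 4) * (p₁ ^ 2 + p₂ ^ 2) + (β / 2) * (q₁ ^ 2 + q₂ ^ 2) + (γ / 2) * (q₁ + q₂) + δ

theorem two_mul_stackelHamiltonian_div (h2 : (2 : K) ≠ 0) (β γ δ : K) {q₁ q₂ : K} (p₁ p₂ : K)
    (hq : q₁ ^ 2 + q₂ ^ 2 ≠ 0) :
    2 * stackelHamiltonian β γ δ q₁ q₂ p₁ p₂ / (q₁ ^ 2 + q₂ ^ 2) =
      (1 / 2) * ((p₁ ^ 2 + p₂ ^ 2) / (q₁ ^ 2 + q₂ ^ 2)) + β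
        + γ * ((q₁ + q₂) / (q₁ ^ 2 + q₂ ^ 2)) + 2 * δ / (q₁ ^ 2 + q₂ ^ 2) := by
  have h4 : (4 : K) = 2 * 2 := by norm_num
  rw [stackelHamiltonian, h4]
  field_simp

theorem kepler_deformation_general (h2 : (2 : K) ≠ 0) {i : K} (hi : i ^ 2 = -1)
    (β γ δ : K) {s t : K} (hst : s * t ≠ 0) (px py : K) :
    (s - t) ^ 2 + (-i * (s + t)) ^ 2 = -4 * s * t ∧
    2 * stackelHamiltonian β γ δ (s - t) (-i * (s + t)) (px * s - py * t) (i * (px * s + py * t)) /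
        ((s - t) ^ 2 + (-i * (s + t)) ^ 2) =
      (1 / 2) * px * py + β + (γ / 4) * ((1 + i) / s - (1 - i) / t) - δ / (2 * s * t) := by
  obtain ⟨hs, ht⟩ := mul_ne_zero_iff.mp hst
  have h4 : (4 : K) = 2 * 2 := by norm_num
  have hq : (s - t) ^ 2 + (-i * (s + t)) ^ 2 = -4 * s * t :=
    sub_sq_add_mul_add_sq_of_sq_eq_neg_one (by rw [neg_sq, hi]) s t
  have hq_ne : -4 * s * t ≠ 0 := by simp [h4, h2, hs, ht]
  have kinetic :
      ((px * s - py * t) ^ 2 + (i * (px * s + py * t)) ^ 2) / (-4 * s * t) = px * py := by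
    rw [sub_sq_add_mul_add_sq_of_sq_eq_neg_one hi, div_eq_iff hq_ne]
    ring
  have linear : (s - t + -i * (s + t)) / (-4 * s * t) = (1 / 4) * ((1 + i) / s - (1 - i) / t) := by
    rw [show -4 * s * t = s * t * -4 by ring, ← div_div, sub_add_neg_mul_add_div_mul i hs ht,
      div_neg]
    ring
  have constant : 2 * δ / (-4 * s * t) = -(δ / (2 * s * t)) := by
    rw [h4]
    field_simp
  refine ⟨hq, ?_⟩
  rw [two_mul_stackelHamiltonian_div h2 _ _ _ _ _ (hq ▸ hq_ne), hq, kinetic, linear, constant]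
  ring

end Field

open Complex in
/-- Integrable deformation of the Kepler problem: after the complex substitution
`q₁ = s − t`, `q₂ = −i(s+t)`, `p₁ = pₓs − p_y t`, `p₂ = i(pₓs + p_y t)`,
the Stäckel Hamiltonian of the cubic family with `α = 0`, divided by
`(q₁² + q₂²)/2`, takes the form of a deformed Kepler Hamiltonian. -/
theorem kepler_deformation (β γ δ : ℂ) (s t : ℂ) (hst : s * t ≠ 0) (px py : ℂ)
    (q₁ q₂ p₁ p₂ H : ℂ)
    (hq₁ : q₁ = s - t) (hq₂ : q₂ = -I * (s + t))
    (hp₁ : p₁ = px * s - py * t) (hp₂ : p₂ = I * (px * s + py * t))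
    (hH : H = (1 / 4) * (p₁ ^ 2 + p₂ ^ 2) + (β / 2) * (q₁ ^ 2 + q₂ ^ 2)
        + (γ / 2) * (q₁ + q₂) + δ) :
    q₁ ^ 2 + q₂ ^ 2 = -4 * s * t ∧
    2 * H / (q₁ ^ 2 + q₂ ^ 2) =
      (1 / 2) * px * py + β + (γ / 4) * ((1 + I) / s - (1 - I) / t) - δ / (2 * s * t) := by
  subst hq₁ hq₂ hp₁ hp₂ hH
  exact kepler_deformation_general two_ne_zero I_sq β γ δ hst px py
end

section
/- Second integrable Hénon–Heiles system in parabolic coordinates. Let α, β ∈ ℝ, y ≠ 0, r = √(x² + y²), and let q₁ = (x − r)/2, q₂ = (x + r)/2, p₁ = p_x − ((r + x)/y)·p_y, p₂ = p_x + ((r − x)/y)·p_y. With the uniform potential U(q) = α²q³ + β, the Stäckel Hamiltonian in parabolic separation variables equals the Hénon–Heiles Hamiltonian: (q₁·(p₁² + U(q₁)) − q₂·(p₂² + U(q₂)))/(q₁ − q₂) = p_x² + p_y² + α²x³ + (α²/2)·x·y² + β. -/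
/-!
The parabolic coordinates `q₁, q₂` are the roots of `t² - x t - y²/4`, and the momenta are
`p₁ = p_x - c q₂`, `p₂ = p_x - c q₁` with `c = 2 p_y / y`. In the kinetic part the terms linear in
`c` cancel and leave `p_x² - c² q₁ q₂ = p_x² + p_y²`. A power `qⁿ` in the potential contributes the
complete homogeneous symmetric polynomial of degree `n` in `q₁, q₂`, which for `n = 3` is
`(q₁ + q₂)³ - 2 q₁ q₂ (q₁ + q₂) = x³ + x y² / 2`.
-/

section ParabolicStackel

variable {K : Type*} [Field K] {q₁ q₂ : K}

/-- The sum `Σ_j (S⁻¹)_{j0} f_j` for the parabolic Stäckel matrix `S = [[1, 1], [-1/q₁, -1/q₂]]`,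
whose inverse has first column `q₁ / (q₁ - q₂)`, `-q₂ / (q₁ - q₂)`, put over a common denominator.
With `f_j = p_j² + U(q_j)` it is the Stäckel Hamiltonian. Meaningful only for `q₁ ≠ q₂`. -/
def parabolicStackelSum (q₁ q₂ f₁ f₂ : K) : K :=
  (q₁ * f₁ - q₂ * f₂) / (q₁ - q₂)

theorem parabolicStackelSum_add (q₁ q₂ f₁ f₂ g₁ g₂ : K) :
    parabolicStackelSum q₁ q₂ (f₁ + g₁) (f₂ + g₂) =
      parabolicStackelSum q₁ q₂ f₁ f₂ + parabolicStackelSum q₁ q₂ g₁ g₂ := by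
  unfold parabolicStackelSum
  ring

theorem parabolicStackelSum_const_mul (q₁ q₂ c f₁ f₂ : K) :
    parabolicStackelSum q₁ q₂ (c * f₁) (c * f₂) = c * parabolicStackelSum q₁ q₂ f₁ f₂ := by
  unfold parabolicStackelSum
  ring

theorem parabolicStackelSum_const (hne : q₁ ≠ q₂) (c : K) :
    parabolicStackelSum q₁ q₂ c c = c := by
  rw [parabolicStackelSum, ← sub_mul, mul_div_cancel_left₀ c (sub_ne_zero.mpr hne)]

theorem parabolicStackelSum_pow (hne : q₁ ≠ q₂) (n : ℕ) :
    parabolicStackelSum q₁ q₂ (q₁ ^ n) (q₂ ^ n) =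
      ∑ i ∈ Finset.range (n + 1), q₁ ^ i * q₂ ^ (n - i) := by
  rw [parabolicStackelSum, ← pow_succ', ← pow_succ', ← geom₂_sum hne, Nat.add_sub_cancel]

theorem parabolicStackelSum_sq_sub_mul (hne : q₁ ≠ q₂) (p c : K) :
    parabolicStackelSum q₁ q₂ ((p - c * q₂) ^ 2) ((p - c * q₁) ^ 2) =
      p ^ 2 - c ^ 2 * (q₁ * q₂) := by
  rw [parabolicStackelSum, div_eq_iff (sub_ne_zero.mpr hne)]
  ring

variable [NeZero (2 : K)] {x y : K}

theorem parabolicStackelSum_kinetic (hne : q₁ ≠ q₂) (hy : y ≠ 0) (hmul : q₁ * q₂ = -(y / 2) ^ 2)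
    (px py : K) :
    parabolicStackelSum q₁ q₂ ((px - 2 * py / y * q₂) ^ 2) ((px - 2 * py / y * q₁) ^ 2) =
      px ^ 2 + py ^ 2 := by
  have h2 : (2 : K) ≠ 0 := two_ne_zero
  rw [parabolicStackelSum_sq_sub_mul hne, hmul]
  field_simp
  ring

theorem parabolicStackelSum_cubic (hne : q₁ ≠ q₂) (hadd : q₁ + q₂ = x)
    (hmul : q₁ * q₂ = -(y / 2) ^ 2) (a b : K) :
    parabolicStackelSum q₁ q₂ (a * q₁ ^ 3 + b) (a * q₂ ^ 3 + b) =
      a * x ^ 3 + a / 2 * x * y ^ 2 + b := by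
  have h2 : (2 : K) ≠ 0 := two_ne_zero
  have hcube : parabolicStackelSum q₁ q₂ (q₁ ^ 3) (q₂ ^ 3) =
      (q₁ + q₂) ^ 3 - 2 * (q₁ * q₂) * (q₁ + q₂) := by
    rw [parabolicStackelSum_pow hne]
    simp only [Finset.sum_range_succ, Finset.sum_range_zero]
    ring
  rw [parabolicStackelSum_add, parabolicStackelSum_const_mul, parabolicStackelSum_const hne,
    hcube, hadd, hmul]
  field_simp
  ring

theorem henon_heiles_second_parabolic_general {r : K} (hy : y ≠ 0) (hr₀ : r ≠ 0)
    (hr : r ^ 2 = x ^ 2 + y ^ 2) (a b px py : K) :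
    parabolicStackelSum ((x - r) / 2) ((x + r) / 2)
        ((px - (r + x) / y * py) ^ 2 + (a * ((x - r) / 2) ^ 3 + b))
        ((px + (r - x) / y * py) ^ 2 + (a * ((x + r) / 2) ^ 3 + b)) =
      px ^ 2 + py ^ 2 + (a * x ^ 3 + a / 2 * x * y ^ 2 + b) := by
  have h2 : (2 : K) ≠ 0 := two_ne_zero
  have hadd : (x - r) / 2 + (x + r) / 2 = x := by field_simp; ring
  have hmul : (x - r) / 2 * ((x + r) / 2) = -(y / 2) ^ 2 := by
    linear_combination -(2⁻¹ ^ 2) * hr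
  have hsub : (x - r) / 2 - (x + r) / 2 = -r := by field_simp; ring
  have hne : (x - r) / 2 ≠ (x + r) / 2 := by
    rw [← sub_ne_zero, hsub]
    exact neg_ne_zero.mpr hr₀
  have hp₁ : px - (r + x) / y * py = px - 2 * py / y * ((x + r) / 2) := by field_simp; ring
  have hp₂ : px + (r - x) / y * py = px - 2 * py / y * ((x - r) / 2) := by field_simp; ring
  rw [hp₁, hp₂, parabolicStackelSum_add, parabolicStackelSum_kinetic hne hy hmul,
    parabolicStackelSum_cubic hne hadd hmul]

end ParabolicStackel

/-- Second integrable Hénon–Heiles system in parabolic coordinates: with the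
uniform potential `U(q) = α²q³ + β`, the Stäckel Hamiltonian in parabolic
separation variables equals the Hénon–Heiles Hamiltonian. -/
theorem henon_heiles_second_parabolic (α β x y px py : ℝ) (hy : y ≠ 0)
    (r q₁ q₂ p₁ p₂ : ℝ) (U : ℝ → ℝ)
    (hr : r = Real.sqrt (x ^ 2 + y ^ 2))
    (hq₁ : q₁ = (x - r) / 2) (hq₂ : q₂ = (x + r) / 2)
    (hp₁ : p₁ = px - ((r + x) / y) * py) (hp₂ : p₂ = px + ((r - x) / y) * py)
    (hU : ∀ q, U q = α ^ 2 * q ^ 3 + β) :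
    (q₁ * (p₁ ^ 2 + U q₁) - q₂ * (p₂ ^ 2 + U q₂)) / (q₁ - q₂) =
      px ^ 2 + py ^ 2 + α ^ 2 * x ^ 3 + (α ^ 2 / 2) * x * y ^ 2 + β := by
  have hpos : 0 < x ^ 2 + y ^ 2 := by positivity
  have hr₀ : r ≠ 0 := hr ▸ (Real.sqrt_pos.mpr hpos).ne'
  have hr₂ : r ^ 2 = x ^ 2 + y ^ 2 := hr ▸ Real.sq_sqrt hpos.le
  have h := henon_heiles_second_parabolic_general hy hr₀ hr₂ (α ^ 2) β px py
  rw [← hq₁, ← hq₂, ← hp₁, ← hp₂, ← hU, ← hU, parabolicStackelSum] at h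
  linear_combination h
end

section
/- Linear r-matrix algebra for the parabolic Lax matrix. Define h(λ) = p_x + y·p_y/(2λ), e(λ) = λ − x − y²/(4λ), f(λ) = p_y²/λ. Then for all λ, μ with λ ≠ 0, μ ≠ 0, λ ≠ μ, the following Poisson bracket relations hold: {e(λ), e(μ)} = 0, {h(λ), h(μ)} = 0, {f(λ), f(μ)} = 0, {h(λ), e(μ)} = (e(μ) − e(λ))/(λ − μ), {h(λ), f(μ)} = (f(λ) − f(μ))/(λ − μ), and {e(λ), f(μ)} = 2·(h(μ) − h(λ))/(λ − μ). -/
/-- Entries of the Lax matrix of the free Stäckel system separable in parabolic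
coordinates, with spectral parameter `lam`. -/
noncomputable def hP (lam : ℝ) : ℝ → ℝ → ℝ → ℝ → ℝ :=
  fun _ y px py => px + y * py / (2 * lam)
noncomputable def eP (lam : ℝ) : ℝ → ℝ → ℝ → ℝ → ℝ :=
  fun x y _ _ => lam - x - y ^ 2 / (4 * lam)
noncomputable def fP (lam : ℝ) : ℝ → ℝ → ℝ → ℝ → ℝ :=
  fun _ _ _ py => py ^ 2 / lam

/-!
The phase space splits as the `(x, pₓ)`-plane times the `(y, p_y)`-plane, and each entry of the Lax
matrix is a sum of a function on either factor, so the bracket of two entries is a sum of two plane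
brackets. On the `y`-plane the entries are `λ⁻¹` times `H = q p / 2`, `E = -q² / 4`, `F = p²`, which
span a copy of `sl(2)`; on the `x`-plane they are `pₓ`, `λ - x` and `0`, whose only nonzero bracket
is `{pₓ, μ - x} = -1`. Hence each bracket of entries is a constant plus `λ⁻¹ μ⁻¹` times an `sl(2)`
generator, and the resolvent identity `λ⁻¹ μ⁻¹ = (μ⁻¹ - λ⁻¹) / (λ - μ)` turns this into the
`r`-matrix form.
-/

/-- The canonical Poisson bracket on the `(q, p)`-plane, with the sign convention `{p, q} = 1`
of `pb`. -/
noncomputable def planePB (f g : ℝ → ℝ → ℝ) (q p : ℝ) : ℝ :=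
  deriv (fun s => f q s) p * deriv (fun s => g s p) q
    - deriv (fun s => f s p) q * deriv (fun s => g q s) p

/-- The sum of a function on the `(x, pₓ)`-plane and a function on the `(y, p_y)`-plane, as a
function on the product phase space in the coordinate order of `pb`. -/
def separatedSum (f g : ℝ → ℝ → ℝ) : ℝ → ℝ → ℝ → ℝ → ℝ :=
  fun x y px py => f x px + g y py

section PlaneBracket

variable (f g : ℝ → ℝ → ℝ) (q p : ℝ)

theorem planePB_self : planePB f f q p = 0 := by
  rw [planePB, mul_comm, sub_self]

theorem planePB_zero_right : planePB f 0 q p = 0 := by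
  simp [planePB]

theorem planePB_of_position (u v : ℝ → ℝ) :
    planePB (fun q _ => u q) (fun q _ => v q) q p = 0 := by
  simp [planePB]

theorem planePB_momentum_sub_position (c : ℝ) :
    planePB (fun _ p => p) (fun q _ => c - q) q p = -1 := by
  simp [planePB]

theorem planePB_smul_smul (a b : ℝ) :
    planePB (a • f) (b • g) q p = a * b * planePB f g q p := by
  simp only [planePB, Pi.smul_apply, smul_eq_mul, deriv_const_mul_field]
  ring

theorem pb_separatedSum (f₁ f₂ g₁ g₂ : ℝ → ℝ → ℝ) (x y px py : ℝ) :
    pb (separatedSum f₁ f₂) (separatedSum g₁ g₂) x y px py =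
      planePB f₁ g₁ x px + planePB f₂ g₂ y py := by
  simp only [pb, planePB, separatedSum, deriv_add_const, deriv_const_add]
  ring

end PlaneBracket

/-- The Cartan generator of the copy of `sl(2)` formed by the quadratic functions on the plane. -/
noncomputable def sl2H (q p : ℝ) : ℝ := q * p / 2

/-- The raising generator of the copy of `sl(2)` formed by the quadratic functions on the plane. -/
noncomputable def sl2E (q _p : ℝ) : ℝ := -q ^ 2 / 4

/-- The lowering generator of the copy of `sl(2)` formed by the quadratic functions on the plane,
scaled against `sl2E` so that `{E, F} = 2H`. -/
def sl2F (_q p : ℝ) : ℝ := p ^ 2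

section Sl2

variable (q p : ℝ)

theorem deriv_sl2H_position : deriv (fun s => sl2H s p) q = p / 2 := by
  simp [sl2H]

theorem deriv_sl2H_momentum : deriv (fun s => sl2H q s) p = q / 2 := by
  simp [sl2H]

theorem deriv_sl2E_position : deriv (fun s => sl2E s p) q = -(2 * q) / 4 := by
  simp [sl2E]

theorem deriv_sl2E_momentum : deriv (fun s => sl2E q s) p = 0 :=
  deriv_const p _

theorem deriv_sl2F_position : deriv (fun s => sl2F s p) q = 0 :=
  deriv_const q _

theorem deriv_sl2F_momentum : deriv (fun s => sl2F q s) p = 2 * p := by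
  simp [sl2F]

theorem planePB_sl2H_sl2E : planePB sl2H sl2E q p = sl2E q p := by
  rw [planePB, deriv_sl2H_momentum, deriv_sl2E_position, deriv_sl2E_momentum, sl2E]
  ring

theorem planePB_sl2H_sl2F : planePB sl2H sl2F q p = -sl2F q p := by
  rw [planePB, deriv_sl2H_position, deriv_sl2F_position, deriv_sl2F_momentum, sl2F]
  ring

theorem planePB_sl2E_sl2F : planePB sl2E sl2F q p = 2 * sl2H q p := by
  rw [planePB, deriv_sl2E_position, deriv_sl2F_position, deriv_sl2F_momentum, sl2H]
  ring

end Sl2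

section LaxEntries

theorem hP_eq_separatedSum (lam : ℝ) :
    hP lam = separatedSum (fun _ p => p) (lam⁻¹ • sl2H) := by
  funext x y px py
  simp only [hP, separatedSum, sl2H, Pi.smul_apply, smul_eq_mul]
  ring

theorem eP_eq_separatedSum (lam : ℝ) :
    eP lam = separatedSum (fun q _ => lam - q) (lam⁻¹ • sl2E) := by
  funext x y px py
  simp only [eP, separatedSum, sl2E, Pi.smul_apply, smul_eq_mul]
  ring

theorem fP_eq_separatedSum (lam : ℝ) : fP lam = separatedSum 0 (lam⁻¹ • sl2F) := by
  funext x y px py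
  simp only [fP, separatedSum, sl2F, Pi.smul_apply, Pi.zero_apply, smul_eq_mul]
  ring

variable (lam mu x y px py : ℝ)

theorem pb_eP_eP : pb (eP lam) (eP mu) x y px py = 0 := by
  rw [eP_eq_separatedSum, eP_eq_separatedSum, pb_separatedSum, planePB_of_position,
    planePB_smul_smul, planePB_self, mul_zero, add_zero]

theorem pb_hP_hP : pb (hP lam) (hP mu) x y px py = 0 := by
  rw [hP_eq_separatedSum, hP_eq_separatedSum, pb_separatedSum, planePB_self,
    planePB_smul_smul, planePB_self, mul_zero, add_zero]

theorem pb_fP_fP : pb (fP lam) (fP mu) x y px py = 0 := by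
  rw [fP_eq_separatedSum, fP_eq_separatedSum, pb_separatedSum, planePB_self,
    planePB_smul_smul, planePB_self, mul_zero, add_zero]

theorem pb_hP_eP : pb (hP lam) (eP mu) x y px py = -1 + lam⁻¹ * mu⁻¹ * sl2E y py := by
  rw [hP_eq_separatedSum, eP_eq_separatedSum, pb_separatedSum, planePB_momentum_sub_position,
    planePB_smul_smul, planePB_sl2H_sl2E]

theorem pb_hP_fP : pb (hP lam) (fP mu) x y px py = -(lam⁻¹ * mu⁻¹ * sl2F y py) := by
  rw [hP_eq_separatedSum, fP_eq_separatedSum, pb_separatedSum, planePB_zero_right,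
    planePB_smul_smul, planePB_sl2H_sl2F, zero_add, mul_neg]

theorem pb_eP_fP : pb (eP lam) (fP mu) x y px py = lam⁻¹ * mu⁻¹ * (2 * sl2H y py) := by
  rw [eP_eq_separatedSum, fP_eq_separatedSum, pb_separatedSum, planePB_zero_right,
    planePB_smul_smul, planePB_sl2E_sl2F, zero_add]

end LaxEntries

section ResolventIdentity

theorem inv_mul_inv_eq_sub_div_sub {K : Type*} [Field K] {a b : K} (ha : a ≠ 0) (hb : b ≠ 0)
    (hab : a ≠ b) : a⁻¹ * b⁻¹ = (b⁻¹ - a⁻¹) / (a - b) := by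
  rw [eq_div_iff (sub_ne_zero.mpr hab), inv_sub_inv hb ha]
  field_simp

variable {lam mu : ℝ} (x y px py : ℝ)

theorem pb_hP_eP_eq_sub_div_sub (hlam : lam ≠ 0) (hmu : mu ≠ 0) (hne : lam ≠ mu) :
    pb (hP lam) (eP mu) x y px py = (eP mu x y px py - eP lam x y px py) / (lam - mu) := by
  have neg_one_eq : (-1 : ℝ) = (mu - lam) / (lam - mu) := by
    rw [← neg_sub lam mu, neg_div, div_self (sub_ne_zero.mpr hne)]
  rw [pb_hP_eP, inv_mul_inv_eq_sub_div_sub hlam hmu hne, neg_one_eq, eP, eP, sl2E]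
  ring

theorem pb_hP_fP_eq_sub_div_sub (hlam : lam ≠ 0) (hmu : mu ≠ 0) (hne : lam ≠ mu) :
    pb (hP lam) (fP mu) x y px py = (fP lam x y px py - fP mu x y px py) / (lam - mu) := by
  rw [pb_hP_fP, inv_mul_inv_eq_sub_div_sub hlam hmu hne, fP, fP, sl2F]
  ring

theorem pb_eP_fP_eq_sub_div_sub (hlam : lam ≠ 0) (hmu : mu ≠ 0) (hne : lam ≠ mu) :
    pb (eP lam) (fP mu) x y px py = 2 * (hP mu x y px py - hP lam x y px py) / (lam - mu) := by
  rw [pb_eP_fP, inv_mul_inv_eq_sub_div_sub hlam hmu hne, hP, hP, sl2H]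
  ring

end ResolventIdentity

/-- Linear r-matrix algebra for the parabolic Lax matrix: the entrywise form of
`{L₁(λ), L₂(μ)} = [r₁₂(λ,μ), L₁(λ)] − [r₂₁(λ,μ), L₂(μ)]` with the standard
rational r-matrix on the loop algebra of `sl(2)`. -/
theorem r_matrix_parabolic :
    ∀ (lam mu x y px py : ℝ), lam ≠ 0 → mu ≠ 0 → lam ≠ mu →
      pb (eP lam) (eP mu) x y px py = 0 ∧
      pb (hP lam) (hP mu) x y px py = 0 ∧
      pb (fP lam) (fP mu) x y px py = 0 ∧
      pb (hP lam) (eP mu) x y px py =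
        (eP mu x y px py - eP lam x y px py) / (lam - mu) ∧
      pb (hP lam) (fP mu) x y px py =
        (fP lam x y px py - fP mu x y px py) / (lam - mu) ∧
      pb (eP lam) (fP mu) x y px py =
        2 * (hP mu x y px py - hP lam x y px py) / (lam - mu) := by
  intro lam mu x y px py hlam hmu hne
  exact ⟨pb_eP_eP lam mu x y px py, pb_hP_hP lam mu x y px py, pb_fP_fP lam mu x y px py,
    pb_hP_eP_eq_sub_div_sub x y px py hlam hmu hne,
    pb_hP_fP_eq_sub_div_sub x y px py hlam hmu hne,
    pb_eP_fP_eq_sub_div_sub x y px py hlam hmu hne⟩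
end
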